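/- arXiv:2303.08292 — 4 statements merged into one kernel-verified Lean document; each statement's English description precedes it below -/
import Mathlib

section
/- Let 0 ≤ x ≤ r₁ ≤ r₂ be real numbers with x < r₁. Then the Abel transform of the indicator function of the annulus [r₁, r₂] evaluated at x, namely 2 ∫_{r₁}^{r₂} r / √(r² − x²) dr, equals 2(√(r₂² − x²) − √(r₁² − x²)), and this number equals the one-dimensional Lebesgue measure of the chord set {z ∈ ℝ : r₁² ≤ z² + x² ≤ r₂²}. (This is the paper's claim that the discretized projection matrix coefficient, defined as the length of the intersection of a ray with an annulus, agrees with the exact Abel transform of the annulus's characteristic function.) -/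
open Real MeasureTheory intervalIntegral

/-- The discretized projection matrix coefficient (the length of the intersection of a ray
at offset `x` from the symmetry axis with the annulus `[r₁, r₂]`) agrees with the exact
Abel transform of the annulus's characteristic function, in the case where the ray offset
lies strictly inside the inner radius. -/
theorem abel_annulus_eq_chord_length (x r₁ r₂ : ℝ) (hx : 0 ≤ x) (hxr : x < r₁)
    (hr : r₁ ≤ r₂) :
    2 * ∫ r in r₁..r₂, r / Real.sqrt (r ^ 2 - x ^ 2) =
        2 * (Real.sqrt (r₂ ^ 2 - x ^ 2) - Real.sqrt (r₁ ^ 2 - x ^ 2)) ∧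
      volume {z : ℝ | r₁ ^ 2 ≤ z ^ 2 + x ^ 2 ∧ z ^ 2 + x ^ 2 ≤ r₂ ^ 2} =
        ENNReal.ofReal (2 * (Real.sqrt (r₂ ^ 2 - x ^ 2) - Real.sqrt (r₁ ^ 2 - x ^ 2))) := by
  have hpos : ∀ r, r₁ ≤ r → 0 < r ^ 2 - x ^ 2 := fun r h => by nlinarith
  have h1 := hpos r₁ le_rfl
  have h2 := hpos r₂ hr
  constructor
  · congr 1
    apply integral_eq_sub_of_hasDerivAt (f := fun r => Real.sqrt (r ^ 2 - x ^ 2))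
    · intro r hr'
      rw [Set.uIcc_of_le hr] at hr'
      have h := hpos r hr'.1
      have hd : HasDerivAt (fun r : ℝ => r ^ 2 - x ^ 2) (2 * r) r := by
        simpa using (hasDerivAt_pow 2 r).sub_const (x ^ 2)
      have h' := hd.sqrt h.ne'
      rw [mul_div_mul_left r _ two_ne_zero] at h'
      exact h'
    · apply ContinuousOn.intervalIntegrable
      rw [Set.uIcc_of_le hr]
      apply ContinuousOn.div (by fun_prop) (by fun_prop)
      intro r hr'
      exact (Real.sqrt_pos.mpr (hpos r hr'.1)).ne'
  · set a := Real.sqrt (r₁ ^ 2 - x ^ 2) with ha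
    set b := Real.sqrt (r₂ ^ 2 - x ^ 2) with hb
    have ha0 : 0 < a := Real.sqrt_pos.mpr h1
    have hb0 : 0 < b := Real.sqrt_pos.mpr h2
    have ha2 : a ^ 2 = r₁ ^ 2 - x ^ 2 := Real.sq_sqrt h1.le
    have hb2 : b ^ 2 = r₂ ^ 2 - x ^ 2 := Real.sq_sqrt h2.le
    have hab : a ≤ b := Real.sqrt_le_sqrt (by nlinarith)
    have hs : {z : ℝ | r₁ ^ 2 ≤ z ^ 2 + x ^ 2 ∧ z ^ 2 + x ^ 2 ≤ r₂ ^ 2} =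
        Set.Icc a b ∪ Set.Icc (-b) (-a) := by
      ext z
      simp only [Set.mem_ofPred_eq, Set.mem_union, Set.mem_Icc]
      constructor
      · rintro ⟨h3, h4⟩
        have h5 : |z| ≤ b := abs_le_of_sq_le_sq (by linarith) hb0.le
        have h6 : a ≤ |z| := by
          have := sq_le_sq.mp (show a ^ 2 ≤ z ^ 2 by linarith)
          rwa [abs_of_pos ha0] at this
        rcases abs_cases z with h | h
        · left; constructor <;> linarith
        · right; constructor <;> linarith
      · rintro (⟨h3, h4⟩ | ⟨h3, h4⟩) <;> constructor <;> nlinarith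
    rw [hs, measure_union _ measurableSet_Icc, Real.volume_Icc, Real.volume_Icc,
      ← ENNReal.ofReal_add (by linarith) (by linarith)]
    · congr 1; ring
    · rw [Set.disjoint_left]
      rintro z ⟨h3, _⟩ ⟨_, h4⟩
      linarith
end

section
/- Let 0 ≤ r₁ ≤ x < r₂ be real numbers. Then the Abel transform of the indicator function of the annulus [r₁, r₂] evaluated at x, namely 2 ∫_{x}^{r₂} r / √(r² − x²) dr, equals 2√(r₂² − x²), and this number equals the one-dimensional Lebesgue measure of the chord set {z ∈ ℝ : r₁² ≤ z² + x² ≤ r₂²}. (This is the paper's claim that the discretized projection matrix coefficient, defined as the length of the intersection of a ray with an annulus, agrees with the exact Abel transform of the annulus's characteristic function, in the case where the ray offset lies inside the annulus.) -/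
open Real MeasureTheory intervalIntegral

/-- The discretized projection matrix coefficient (the length of the intersection of a ray
at offset `x` from the symmetry axis with the annulus `[r₁, r₂]`) agrees with the exact
Abel transform of the annulus's characteristic function, in the case where the ray offset
lies inside the annulus. -/
theorem abel_annulus_eq_chord_length_inside (x r₁ r₂ : ℝ) (hr₁ : 0 ≤ r₁) (hr₁x : r₁ ≤ x)
    (hxr₂ : x < r₂) :
    2 * ∫ r in x..r₂, r / Real.sqrt (r ^ 2 - x ^ 2) = 2 * Real.sqrt (r₂ ^ 2 - x ^ 2) ∧
      volume {z : ℝ | r₁ ^ 2 ≤ z ^ 2 + x ^ 2 ∧ z ^ 2 + x ^ 2 ≤ r₂ ^ 2} =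
        ENNReal.ofReal (2 * Real.sqrt (r₂ ^ 2 - x ^ 2)) := by
  have hx0 : 0 ≤ x := hr₁.trans hr₁x
  constructor
  · have hcont : Continuous (fun r : ℝ => Real.sqrt (r ^ 2 - x ^ 2)) := by fun_prop
    have hd : ∀ r ∈ Set.Ioo x r₂, HasDerivAt (fun r : ℝ => Real.sqrt (r ^ 2 - x ^ 2))
        (r / Real.sqrt (r ^ 2 - x ^ 2)) r := by
      intro r hr
      have hpos : 0 < r ^ 2 - x ^ 2 := by nlinarith [hr.1]
      have h1 : HasDerivAt (fun r : ℝ => r ^ 2 - x ^ 2) (2 * r) r := by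
        simpa using (hasDerivAt_pow 2 r).sub_const (x ^ 2)
      have h2 := h1.sqrt hpos.ne'
      rwa [mul_div_mul_left _ _ (two_ne_zero)] at h2
    have hi : IntervalIntegrable (fun r : ℝ => r / Real.sqrt (r ^ 2 - x ^ 2)) volume x r₂ := by
      rw [intervalIntegrable_iff_integrableOn_Ioc_of_le hxr₂.le]
      refine integrableOn_deriv_of_nonneg hcont.continuousOn hd ?_
      intro r hr
      exact div_nonneg (hx0.trans hr.1.le) (Real.sqrt_nonneg _)
    rw [integral_eq_sub_of_hasDerivAt_of_le hxr₂.le hcont.continuousOn hd hi]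
    simp
  · have hs : {z : ℝ | r₁ ^ 2 ≤ z ^ 2 + x ^ 2 ∧ z ^ 2 + x ^ 2 ≤ r₂ ^ 2} =
        Set.Icc (-Real.sqrt (r₂ ^ 2 - x ^ 2)) (Real.sqrt (r₂ ^ 2 - x ^ 2)) := by
      ext z
      have hpos : 0 ≤ r₂ ^ 2 - x ^ 2 := by nlinarith
      rw [Set.mem_Icc, ← abs_le, Real.le_sqrt (abs_nonneg z) hpos, sq_abs]
      constructor
      · rintro ⟨_, h⟩
        linarith
      · intro h
        exact ⟨by nlinarith [sq_nonneg z], by linarith⟩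
    rw [hs, Real.volume_Icc]
    congr 1
    ring
end

section
/- Let D ≥ 0 be a real number, S = 27·D + 2, C = ((S + √(S² − 4))/2)^{1/3} the real cube root, and τ = (C + 1 + 1/C)/3. Then τ ≥ 1 and τ³ − τ² = D. (This is the correctness of the closed-form Cardano expression for the scaling factor τ^{(k)} used in the h-update of the paper's ADMM algorithm.) -/
open Real

/-- Correctness of the closed-form Cardano expression for the scaling factor `τ` used in
the h-update of the paper's ADMM algorithm: `τ ≥ 1` and `τ³ − τ² = D`. -/
theorem cardano_tau_correct (D : ℝ) (hD : 0 ≤ D)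
    (C τ : ℝ)
    (hC : C = ((27 * D + 2 + Real.sqrt ((27 * D + 2) ^ 2 - 4)) / 2) ^ ((1 : ℝ) / 3))
    (hτ : τ = (C + 1 + 1 / C) / 3) :
    1 ≤ τ ∧ τ ^ 3 - τ ^ 2 = D := by
  have hr : 0 ≤ (27 * D + 2) ^ 2 - 4 := by nlinarith
  have hs := Real.sq_sqrt hr
  have hs0 := Real.sqrt_nonneg ((27 * D + 2) ^ 2 - 4)
  set s := Real.sqrt ((27 * D + 2) ^ 2 - 4) with hsdef
  have hX : 0 < (27 * D + 2 + s) / 2 := by linarith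
  have hC0 : 0 < C := by rw [hC]; exact Real.rpow_pos_of_pos hX _
  have hC3 : C ^ 3 = (27 * D + 2 + s) / 2 := by
    rw [hC, ← Real.rpow_natCast, ← Real.rpow_mul hX.le]
    norm_num
  obtain ⟨v, hv⟩ : ∃ v, v = 1 / C := ⟨_, rfl⟩
  have hv0 : 0 < v := by rw [hv]; positivity
  have hCv : C * v = 1 := by rw [hv]; field_simp
  rw [← hv] at hτ
  have hCv3 : C ^ 3 * v ^ 3 = 1 := by rw [← mul_pow, hCv, one_pow]
  have hsum : C ^ 3 + v ^ 3 = 27 * D + 2 := by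
    have h : C ^ 3 * (C ^ 3 + v ^ 3) = C ^ 3 * (27 * D + 2) := by
      rw [mul_add, hCv3, hC3]
      linear_combination hs / 4
    exact mul_left_cancel₀ (by positivity) h
  constructor
  · rw [hτ]
    nlinarith [sq_nonneg (C - v)]
  · rw [hτ]
    linear_combination hsum / 27 + (C + v) / 9 * hCv
end

section
/- Let δ > 0 and let f : ℝ → ℝ be continuous on [0, δ]. If for every x with 0 ≤ x ≤ δ the Abel transform vanishes, i.e. ∫_{x}^{δ} r f(r) / √(r² − x²) dr = 0, then f(r) = 0 for all r ∈ [0, δ]. (This is the injectivity of the single-view axially-symmetric forward operator, the claim Null(A) = {0} used to verify the hypothesis Null(∇) ∩ Null(A) = {0} of the paper's convergence theorem for its ADMM algorithm.) -/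
open Real intervalIntegral Set

open MeasureTheory in
lemma abel_kernel (s r : ℝ) (hs : 0 ≤ s) (hsr : s < r) :
    IntegrableOn (fun x => x / √(x ^ 2 - s ^ 2) * (1 / √(r ^ 2 - x ^ 2))) (Set.Ioc s r) ∧
    ∫ x in Set.Ioc s r, x / √(x ^ 2 - s ^ 2) * (1 / √(r ^ 2 - x ^ 2)) = π / 2 := by
  have hD : 0 < r ^ 2 - s ^ 2 := by nlinarith
  set G : ℝ → ℝ := fun x => arcsin ((2 * x ^ 2 - s ^ 2 - r ^ 2) / (r ^ 2 - s ^ 2)) / 2 with hG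
  have hc : ContinuousOn G (Set.Icc s r) := by
    apply Continuous.continuousOn
    refine (continuous_arcsin.comp ?_).div_const _
    fun_prop
  have hd : ∀ x ∈ Set.Ioo s r,
      HasDerivAt G (x / √(x ^ 2 - s ^ 2) * (1 / √(r ^ 2 - x ^ 2))) x := by
    intro x ⟨h1, h2⟩
    have ha : 0 < x ^ 2 - s ^ 2 := by nlinarith
    have hb : 0 < r ^ 2 - x ^ 2 := by nlinarith
    have hu : HasDerivAt (fun x : ℝ => (2 * x ^ 2 - s ^ 2 - r ^ 2) / (r ^ 2 - s ^ 2))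
        (4 * x / (r ^ 2 - s ^ 2)) x := by
      have := ((((hasDerivAt_pow 2 x).const_mul 2).sub_const (s ^ 2)).sub_const
        (r ^ 2)).div_const (r ^ 2 - s ^ 2)
      refine this.congr_deriv ?_
      norm_num
      ring
    have hn1 : (2 * x ^ 2 - s ^ 2 - r ^ 2) / (r ^ 2 - s ^ 2) ≠ -1 := by
      intro h
      rw [div_eq_iff hD.ne'] at h
      nlinarith
    have hn2 : (2 * x ^ 2 - s ^ 2 - r ^ 2) / (r ^ 2 - s ^ 2) ≠ 1 := by
      intro h
      rw [div_eq_iff hD.ne'] at h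
      nlinarith
    have := ((hasDerivAt_arcsin hn1 hn2).comp x hu).div_const 2
    refine HasDerivAt.congr_deriv this ?_
    have e : 1 - ((2 * x ^ 2 - s ^ 2 - r ^ 2) / (r ^ 2 - s ^ 2)) ^ 2
        = (2 * √(x ^ 2 - s ^ 2) * √(r ^ 2 - x ^ 2) / (r ^ 2 - s ^ 2)) ^ 2 := by
      rw [div_pow, div_pow, mul_pow, mul_pow, sq_sqrt ha.le, sq_sqrt hb.le]
      field_simp
      ring
    rw [e, sqrt_sq (by positivity)]
    have := sqrt_pos.2 ha
    have := sqrt_pos.2 hb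
    field_simp
    ring
  have hi : IntegrableOn (fun x => x / √(x ^ 2 - s ^ 2) * (1 / √(r ^ 2 - x ^ 2)))
      (Set.Ioc s r) := by
    refine integrableOn_deriv_of_nonneg hc hd ?_
    intro x hx
    have : 0 ≤ x := hs.trans hx.1.le
    positivity
  refine ⟨hi, ?_⟩
  rw [← intervalIntegral.integral_of_le hsr.le,
    integral_eq_sub_of_hasDerivAt_of_le hsr.le hc hd
      ((intervalIntegrable_iff_integrableOn_Ioc_of_le hsr.le).2 hi)]
  have e1 : (2 * r ^ 2 - s ^ 2 - r ^ 2) / (r ^ 2 - s ^ 2) = 1 := by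
    rw [div_eq_iff hD.ne']; ring
  have e2 : (2 * s ^ 2 - s ^ 2 - r ^ 2) / (r ^ 2 - s ^ 2) = -1 := by
    rw [div_eq_iff hD.ne']; ring
  simp only [hG, e1, e2, arcsin_one, arcsin_neg_one]
  ring

open MeasureTheory in
lemma abel_kernel' (s r δ : ℝ) (hs : 0 ≤ s) (hsr : s < r) (hr : r ≤ δ) :
    IntegrableOn (fun x => x / √(x ^ 2 - s ^ 2) * (1 / √(r ^ 2 - x ^ 2))) (Set.Ioc s δ) ∧
    ∫ x in Set.Ioc s δ, x / √(x ^ 2 - s ^ 2) * (1 / √(r ^ 2 - x ^ 2)) = π / 2 := by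
  obtain ⟨h1, h2⟩ := abel_kernel s r hs hsr
  have hz : ∀ x ∈ Set.Ioc s δ \ Set.Ioc s r,
      x / √(x ^ 2 - s ^ 2) * (1 / √(r ^ 2 - x ^ 2)) = 0 := by
    intro x hx
    have : r < x := by
      by_contra hh
      exact hx.2 ⟨hx.1.1, not_lt.1 hh⟩
    rw [sqrt_eq_zero_of_nonpos (x := r ^ 2 - x ^ 2) (by nlinarith)]
    simp
  constructor
  · exact h1.of_forall_sdiff_eq_zero measurableSet_Ioc hz
  · rw [← h2]
    exact (setIntegral_eq_of_subset_of_forall_sdiff_eq_zero measurableSet_Ioc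
      (Set.Ioc_subset_Ioc_right hr) hz)

open MeasureTheory in
lemma abel_main (δ : ℝ) (g : ℝ → ℝ) (hg : Continuous g)
    (h : ∀ x : ℝ, 0 ≤ x → x ≤ δ →
      ∫ r in x..δ, r * g r / Real.sqrt (r ^ 2 - x ^ 2) = 0) (s : ℝ) (hs : 0 ≤ s) (hsδ : s ≤ δ) :
    ∫ r in s..δ, r * g r = 0 := by
  set μ : Measure ℝ := volume.restrict (Set.Ioc s δ) with hμ
  set F : ℝ → ℝ → ℝ := fun x r =>
    (r * g r) * (x / √(x ^ 2 - s ^ 2) * (1 / √(r ^ 2 - x ^ 2))) with hF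
  have hmeas : Measurable (Function.uncurry F) := by
    have := hg.measurable
    simp only [hF, Function.uncurry_def]
    fun_prop
  have hInt : Integrable (Function.uncurry F) (μ.prod μ) := by
    rw [integrable_prod_iff' hmeas.aestronglyMeasurable]
    constructor
    · filter_upwards [ae_restrict_mem measurableSet_Ioc] with r hr
      exact (abel_kernel' s r δ hs hr.1 hr.2).1.const_mul (r * g r)
    · have hI : Integrable (fun r => |r * g r| * (π / 2)) μ := by
        have hcont : Continuous (fun r => |r * g r| * (π / 2)) := by fun_prop
        exact (hcont.integrableOn_Icc).mono_set Set.Ioc_subset_Icc_self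
      refine hI.congr ?_
      filter_upwards [ae_restrict_mem measurableSet_Ioc] with r hr
      rw [← (abel_kernel' s r δ hs hr.1 hr.2).2, ← MeasureTheory.integral_const_mul]
      refine setIntegral_congr_fun measurableSet_Ioc ?_
      intro x hx
      have h0 : 0 ≤ x := hs.trans hx.1.le
      simp only [hF, Function.uncurry_apply_pair, norm_mul, Real.norm_eq_abs, abs_mul]
      rw [abs_of_nonneg (a := x / √(x ^ 2 - s ^ 2)) (by positivity),
        abs_of_nonneg (a := 1 / √(r ^ 2 - x ^ 2)) (by positivity)]
  have hswap := integral_integral_swap hInt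
  have hL : ∫ x, ∫ r, F x r ∂μ ∂μ = 0 := by
    rw [← MeasureTheory.integral_zero ℝ ℝ (μ := μ)]
    refine setIntegral_congr_fun measurableSet_Ioc ?_
    intro x hx
    have h0 : 0 ≤ x := hs.trans hx.1.le
    have hx0 := h x h0 hx.2
    rw [intervalIntegral.integral_of_le hx.2] at hx0
    have hz : ∀ r ∈ Set.Ioc s δ \ Set.Ioc x δ, r * g r / √(r ^ 2 - x ^ 2) = 0 := by
      intro r hr
      have h1 : r ≤ x := by
        by_contra hh
        exact hr.2 ⟨not_le.1 hh, hr.1.2⟩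
      have h2 : 0 ≤ r := hs.trans hr.1.1.le
      rw [sqrt_eq_zero_of_nonpos (x := r ^ 2 - x ^ 2) (by nlinarith)]
      simp
    have h3 := setIntegral_eq_of_subset_of_forall_sdiff_eq_zero (μ := volume) measurableSet_Ioc
      (Set.Ioc_subset_Ioc_left hx.1.le) hz
    rw [hx0] at h3
    have : ∀ r, F x r = x / √(x ^ 2 - s ^ 2) * (r * g r / √(r ^ 2 - x ^ 2)) := by
      intro r; simp only [hF]; ring
    simp only [this]
    rw [MeasureTheory.integral_const_mul, h3, mul_zero]
  have hR : ∫ r, ∫ x, F x r ∂μ ∂μ = (∫ r in s..δ, r * g r) * (π / 2) := by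
    rw [intervalIntegral.integral_of_le hsδ, ← MeasureTheory.integral_mul_const]
    refine setIntegral_congr_fun measurableSet_Ioc ?_
    intro r hr
    simp only [hF]
    rw [MeasureTheory.integral_const_mul, (abel_kernel' s r δ hs hr.1 hr.2).2]
  rw [hL, hR] at hswap
  have := pi_pos
  rcases mul_eq_zero.1 hswap.symm with h | h
  · exact h
  · linarith

/-- Injectivity of the single-view axially-symmetric forward operator: if the Abel
transform of a continuous function `f` supported on `[0, δ]` vanishes for every offset
`x ∈ [0, δ]`, then `f` vanishes on `[0, δ]`.  This is the claim `Null(A) = {0}` used to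
verify the hypothesis `Null(∇) ∩ Null(A) = {0}` of the paper's convergence theorem. -/
theorem abel_transform_injective (δ : ℝ) (hδ : 0 < δ) (f : ℝ → ℝ)
    (hf : ContinuousOn f (Set.Icc 0 δ))
    (h : ∀ x : ℝ, 0 ≤ x → x ≤ δ →
      ∫ r in x..δ, r * f r / Real.sqrt (r ^ 2 - x ^ 2) = 0) :
    ∀ r ∈ Set.Icc (0 : ℝ) δ, f r = 0 := by
  set g : ℝ → ℝ := Set.IccExtend hδ.le ((Set.Icc 0 δ).domRestrict f) with hgdef
  have hg : Continuous g := (continuousOn_iff_continuous_domRestrict.1 hf).Icc_extend'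
  have hfg : ∀ r ∈ Set.Icc (0 : ℝ) δ, g r = f r := by
    intro r hr
    rw [hgdef, Set.IccExtend_of_mem _ _ hr]
    rfl
  have hI : ∀ s, 0 ≤ s → s ≤ δ → ∫ r in s..δ, r * g r = 0 := by
    refine abel_main δ g hg ?_
    intro x hx hxδ
    rw [← h x hx hxδ]
    refine intervalIntegral.integral_congr ?_
    intro r hr
    rw [Set.uIcc_of_le hxδ] at hr
    simp only [hfg r ⟨hx.trans hr.1, hr.2⟩]
  have hz : Set.EqOn g 0 (Set.Ioo 0 δ) := by
    intro s hs
    have hc : Continuous (fun r => r * g r) := by fun_prop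
    have hd : HasDerivAt (fun u => ∫ r in u..δ, r * g r) (-(s * g s)) s :=
      intervalIntegral.integral_hasDerivAt_left (hc.intervalIntegrable _ _)
        (hc.stronglyMeasurableAtFilter _ _) hc.continuousAt
    have hev : (fun u => ∫ r in u..δ, r * g r) =ᶠ[nhds s] fun _ => (0 : ℝ) := by
      filter_upwards [Ioo_mem_nhds hs.1 hs.2] with u hu
      exact hI u hu.1.le hu.2.le
    have h0 := hd.unique ((hasDerivAt_const s (0 : ℝ)).congr_of_eventuallyEq hev)
    have h1 : s * g s = 0 := by linarith
    exact (mul_eq_zero.1 h1).resolve_left hs.1.ne'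
  have hcl := hz.closure hg continuous_zero
  rw [closure_Ioo hδ.ne] at hcl
  intro r hr
  rw [← hfg r hr]
  exact hcl hr
end
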